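/- arXiv:2403.08027 — 2 statements merged into one kernel-verified Lean document; each statement's English description precedes it below -/
import Mathlib

section
/- (Isolation Axiom for the McCatch score) Fix a microcluster cardinality m ∈ ℕ with m ≥ 1, a dataset cardinality n ∈ ℕ, a Transformation Cost t > 0, a smallest radius r₁ > 0, and an average 1NN distance d̄ ≥ 0. If two Bridge's Lengths satisfy 0 ≤ g < g' and g' > r₁, then s(m, g, d̄) < s(m, g', d̄): with all else equal, the microcluster that is farther from its nearest inlier receives the strictly larger anomaly score. -/
/-!
Only the term `t * ucl (g / r₁)` depends on the Bridge's Length, so the claim reduces to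
`ucl u < ucl v` whenever `u < v` and `1 < v` (`ucl_lt_ucl`).

The function `log2` is not monotone (it jumps up to `0` at nonpositive inputs), but
`x ↦ max x 0` semiconjugates it to the monotone function `posLog x = log₂ (max x 1)`, so the
`k`-th term of the series is `posLog^[k + 1] (max x 0)` and each term is monotone in `x`.
The first term, `posLog`, is strictly larger at `v > 1` than at `u`. The series has finitely many
nonzero terms because `n ≤ 2 ^ (n - 1)` gives `posLog x ≤ n - 1` for `x ≤ n`, so
that `n` iterations bring `x` to `0`.
-/

/-- Base-2 logarithm, taking the value 0 on nonpositive inputs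
(the truncation of Mathlib's `Real.logb 2`). -/
noncomputable def log2 (x : ℝ) : ℝ := if x ≤ 0 then 0 else Real.logb 2 x

/-- The universal code length `L(x) = ∑_{k=1}^∞ max (log₂^[k] x) 0`. -/
noncomputable def ucl (x : ℝ) : ℝ := ∑' k : ℕ, max (log2^[k + 1] x) 0

/-- The McCatch anomaly score of a microcluster with cardinality `m`, in a dataset of
cardinality `n`, with Transformation Cost `t`, smallest radius `r₁`, Bridge's Length `g`,
and average 1NN distance `davg`:
`s = (L(m) + L(n) + t·L(g/r₁) + (m-1)·t·L(1 + ⌈davg/r₁⌉)) / m`. -/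
noncomputable def mcScore (m n : ℕ) (t r₁ g davg : ℝ) : ℝ :=
  (ucl m + ucl n + t * ucl (g / r₁) +
    ((m : ℝ) - 1) * t * ucl (1 + (⌈davg / r₁⌉ : ℝ))) / (m : ℝ)

/-- The truncated logarithm `max (log₂ x) 0`, written as `log₂ (max x 1)`, which makes its
monotonicity evident. -/
noncomputable def posLog (x : ℝ) : ℝ := Real.logb 2 (max x 1)

lemma posLog_mono : Monotone posLog := fun _ _ h =>
  Real.logb_le_logb_of_le one_lt_two (by positivity) (max_le_max_right 1 h)

lemma posLog_nonneg (x : ℝ) : 0 ≤ posLog x :=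
  Real.logb_nonneg one_lt_two (le_max_right x 1)

lemma posLog_lt_posLog {u v : ℝ} (huv : u < v) (hv : 1 < v) : posLog u < posLog v :=
  Real.logb_lt_logb one_lt_two (by positivity) (lt_max_of_lt_left (max_lt huv hv))

lemma posLog_eq_zero {x : ℝ} (hx : x ≤ 1) : posLog x = 0 := by
  simp [posLog, max_eq_right hx]

lemma semiconj_log2_posLog : Function.Semiconj (fun x : ℝ => max x 0) log2 posLog := by
  intro x
  change max (log2 x) 0 = posLog (max x 0)
  rcases le_or_gt x 0 with h | h
  · rw [max_eq_right h, posLog_eq_zero zero_le_one, log2, if_pos h, max_self]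
  · rw [max_eq_left h.le, log2, if_neg h.not_ge]
    rcases le_total x 1 with h1 | h1
    · rw [posLog_eq_zero h1, max_eq_right (Real.logb_nonpos one_lt_two h.le h1)]
    · rw [posLog, max_eq_left h1, max_eq_left (Real.logb_nonneg one_lt_two h1)]

lemma max_log2_iterate (k : ℕ) (x : ℝ) :
    max (log2^[k] x) 0 = posLog^[k] (max x 0) :=
  semiconj_log2_posLog.iterate_right k x

lemma posLog_le_of_le_succ {x : ℝ} {n : ℕ} (hx : x ≤ (n + 1 : ℕ)) : posLog x ≤ n := by
  rw [posLog, Real.logb_le_iff_le_rpow one_lt_two (by positivity), Real.rpow_natCast]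
  have h : n + 1 ≤ 2 ^ n := Nat.lt_two_pow_self
  have h' : ((n + 1 : ℕ) : ℝ) ≤ 2 ^ n := by exact_mod_cast h
  exact max_le (hx.trans h') (one_le_pow₀ one_le_two)

lemma posLog_iterate_eq_zero (n : ℕ) :
    ∀ x : ℝ, 0 ≤ x → x ≤ n → posLog^[n] x = 0 := by
  induction n with
  | zero => intro x h0 h1; exact le_antisymm (by simpa using h1) h0
  | succ n ih =>
    intro x _ h1
    exact ih _ (posLog_nonneg x) (posLog_le_of_le_succ h1)

lemma summable_ucl (x : ℝ) : Summable fun k : ℕ => max (log2^[k + 1] x) 0 := by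
  obtain ⟨N, hN⟩ := exists_nat_ge (max x 0)
  refine summable_of_ne_finset_zero (s := Finset.range N) fun k hk => ?_
  have hNk : N ≤ k + 1 := by rw [Finset.mem_range] at hk; omega
  rw [max_log2_iterate]
  exact posLog_iterate_eq_zero _ _ (le_max_right _ _) (hN.trans (by exact_mod_cast hNk))

lemma ucl_lt_ucl {u v : ℝ} (huv : u < v) (hv : 1 < v) : ucl u < ucl v := by
  refine Summable.tsum_lt_tsum (i := 0) (fun k => ?_) ?_ (summable_ucl u) (summable_ucl v)
  · simp only [max_log2_iterate]
    exact posLog_mono.iterate (k + 1) (max_le_max_right 0 huv.le)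
  · simp only [max_log2_iterate]
    exact posLog_lt_posLog
      (max_lt (lt_max_of_lt_left huv) (lt_max_of_lt_left (by linarith))) (lt_max_of_lt_left hv)

/-- Isolation Axiom: all else equal, a microcluster with a strictly larger
Bridge's Length `g' > g` (with `g' > r₁`) gets a strictly larger score. -/
theorem mcScore_isolation_axiom (m n : ℕ) (t r₁ davg g g' : ℝ)
    (hm : 1 ≤ m) (ht : 0 < t) (hr₁ : 0 < r₁) (hdavg : 0 ≤ davg)
    (hg : 0 ≤ g) (hgg' : g < g') (hg'r : r₁ < g') :
    mcScore m n t r₁ g davg < mcScore m n t r₁ g' davg := by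
  have hL : ucl (g / r₁) < ucl (g' / r₁) :=
    ucl_lt_ucl (div_lt_div_of_pos_right hgg' hr₁) ((one_lt_div hr₁).2 hg'r)
  have hm' : (0 : ℝ) < m := by exact_mod_cast hm
  unfold mcScore
  gcongr
end

section
/- (Cardinality dilution of the McCatch score) Fix a dataset cardinality n ∈ ℕ, a Transformation Cost t > 0, a smallest radius r₁ > 0, a Bridge's Length g ≥ 0, and an average 1NN distance d̄ ≥ 0. Then as the microcluster cardinality m tends to infinity, the score s(m, g, d̄) tends to t·L(1 + ⌈d̄/r₁⌉); that is, the costs of storing the cardinality, the identifier of the nearest inlier, and the Bridge's Length are diluted over the points, and the per-point score converges to the per-point internal description cost. -/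
theorem max_log2_le (y : ℝ) : max (log2 y) 0 ≤ 3 / 4 * max y 0 := by
  unfold log2
  split_ifs with h
  · simp
  · push Not at h
    rw [max_eq_left h.le]
    refine max_le ?_ (by positivity)
    have h2 := Real.log_two_gt_d9
    rw [Real.logb, div_le_iff₀ (by linarith)]
    -- The tangent line of `log` at `2` gives `log y ≤ y / 2 - 1 + log 2 ≤ y / 2`.
    have h3 := Real.log_le_sub_one_of_pos (show 0 < y / 2 by positivity)
    rw [Real.log_div h.ne' (by norm_num)] at h3
    have h4 := Real.log_two_lt_d9
    nlinarith

theorem max_iterate_log2_le (x : ℝ) (k : ℕ) :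
    max (log2^[k + 1] x) 0 ≤ max (log2 x) 0 * (3 / 4) ^ k := by
  induction k with
  | zero => simp
  | succ k ih =>
    rw [Function.iterate_succ_apply', pow_succ]
    have := max_log2_le (log2^[k + 1] x)
    linarith

theorem ucl_nonneg (x : ℝ) : 0 ≤ ucl x := tsum_nonneg fun _ => le_max_right _ _

theorem ucl_le (x : ℝ) : ucl x ≤ 4 * max (log2 x) 0 := by
  have hg : HasSum (fun k : ℕ => max (log2 x) 0 * (3 / 4 : ℝ) ^ k)
      (max (log2 x) 0 * (1 - 3 / 4)⁻¹) :=
    (hasSum_geometric_of_lt_one (by norm_num) (by norm_num)).mul_left _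
  have hs : Summable fun k : ℕ => max (log2^[k + 1] x) 0 :=
    Summable.of_nonneg_of_le (fun _ => le_max_right _ _) (max_iterate_log2_le x) hg.summable
  have := hasSum_le (max_iterate_log2_le x) hs.hasSum hg
  unfold ucl
  linarith

theorem tendsto_ucl_div_atTop :
    Filter.Tendsto (fun m : ℕ => ucl m / (m : ℝ)) Filter.atTop (nhds 0) := by
  have hlog : Filter.Tendsto (fun m : ℕ => 4 / Real.log 2 * (Real.log m / (m : ℝ)))
      Filter.atTop (nhds 0) := by
    have h := (Real.isLittleO_log_id_atTop.tendsto_div_nhds_zero.comp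
      (tendsto_natCast_atTop_atTop (R := ℝ))).const_mul (4 / Real.log 2)
    simpa using h
  refine squeeze_zero' (.of_forall fun m => div_nonneg (ucl_nonneg _) m.cast_nonneg) ?_ hlog
  filter_upwards [Filter.eventually_ge_atTop 1] with m hm
  have hm' : (1 : ℝ) ≤ m := by exact_mod_cast hm
  have h0 : 0 ≤ Real.logb 2 m := Real.logb_nonneg (by norm_num) hm'
  have h := ucl_le m
  rw [log2, if_neg (by linarith), max_eq_left h0, Real.logb] at h
  calc ucl m / (m : ℝ) ≤ 4 * (Real.log m / Real.log 2) / m := by gcongr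
    _ = 4 / Real.log 2 * (Real.log m / (m : ℝ)) := by ring

/-- Cardinality dilution: as the microcluster cardinality `m → ∞`, the score tends to
the per-point internal description cost `t·L(1 + ⌈davg/r₁⌉)`. -/
theorem mcScore_cardinality_dilution (n : ℕ) (t r₁ g davg : ℝ)
    (ht : 0 < t) (hr₁ : 0 < r₁) (hg : 0 ≤ g) (hdavg : 0 ≤ davg) :
    Filter.Tendsto (fun m : ℕ => mcScore m n t r₁ g davg) Filter.atTop
      (nhds (t * ucl (1 + (⌈davg / r₁⌉ : ℝ)))) := by
  have hK : Filter.Tendsto (fun m : ℕ => (ucl n + t * ucl (g / r₁) -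
      t * ucl (1 + (⌈davg / r₁⌉ : ℝ))) / (m : ℝ)) Filter.atTop (nhds 0) :=
    tendsto_const_div_atTop_nhds_zero_nat _
  have h := (tendsto_ucl_div_atTop.add hK).add_const (t * ucl (1 + (⌈davg / r₁⌉ : ℝ)))
  rw [add_zero, zero_add] at h
  refine h.congr' ?_
  -- For `m = 0` the score is a division by zero, so the identity only holds for `m ≥ 1`.
  filter_upwards [Filter.eventually_ge_atTop 1] with m hm
  have hm' : (m : ℝ) ≠ 0 := by positivity
  unfold mcScore
  field_simp
  ring
end
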